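/- arXiv:2205.11494 — 2 statements merged into one kernel-verified Lean document; each statement's English description precedes it below -/
import Mathlib

section
/- Let H be a Hopf algebra over a field k, B a unital algebra, and u : H → B a convolution-invertible map with u(1) = 1. Define h▷b := u(h_{(1)})·b·u⁻¹(h_{(2)}). Then: (1) ▷ is an action of H on B (h▷(g▷b) = (hg)▷b for all h,g,b) if and only if u⁻¹(g_{(1)})u⁻¹(h_{(1)})u(h_{(2)}g_{(2)}) lies in the centre Z(B) for all h,g ∈ H; (2) when this holds, the trivial action h▷'b := ε(h)b together with σ^u(h,g) := u⁻¹(g_{(1)})u⁻¹(h_{(1)})u(h_{(2)}g_{(2)}) is a cocycle datum of associative type. -/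
/-!
Everything takes place in convolution algebras `Hom(C, B)` for `C = H`, `H ⊗ H`, `H ⊗ H ⊗ H`,
where pull-back along a coalgebra map `C → D` is multiplicative (`convPull`). Over `H ⊗ H`, the map
`u` yields three convolution units `a = u ⊗ ε`, `b = ε ⊗ u` and `m = u ∘ mul`, and
`σ^u = b⁻¹ * a⁻¹ * m` (`sigmaUnit`).

Writing `ĉ` for the map `ε(·)c`, one has `h ▷ (g ▷ c) = (a b ĉ b⁻¹ a⁻¹)(h ⊗ g)` and
`(hg) ▷ c = (m ĉ m⁻¹)(h ⊗ g)`, so `▷` is an action iff `σ^u` commutes with every `ĉ`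
(`conj_eq_conj_iff`), and since `(F * ĉ)(x) = F(x)c` this is pointwise centrality of `σ^u`.

Invertibility of `σ^u` is automatic. For the cocycle identity (`sigma_cocycle`), `m = a b σ^u` is
pulled back along the two multiplication maps `H ⊗ H ⊗ H → H ⊗ H`. By associativity both pull-backs
of `m` equal `(h,g,f) ↦ u(hgf)`. Expanding once more and moving `σ^u(h,g)` past `u(f)` by
centrality, both become `u(h₍₁₎)u(g₍₁₎)u(f₍₁₎)` convolved with one side of the identity, and the
common unit cancels.
-/

open scoped TensorProduct
open Coalgebra

noncomputable section

section SweedlerDefs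

variable (k : Type*) [Field k]
variable (H : Type*) [Ring H] [Bialgebra k H]

/-- Left-nested triple comultiplication `h ↦ (h₍₁₎ ⊗ h₍₂₎) ⊗ h₍₃₎`. -/
def Δ3 : H →ₗ[k] (H ⊗[k] H) ⊗[k] H :=
  (LinearMap.rTensor H (Coalgebra.comul (R := k) (A := H))) ∘ₗ Coalgebra.comul

/-- Left-nested fourfold comultiplication. -/
def Δ4 : H →ₗ[k] ((H ⊗[k] H) ⊗[k] H) ⊗[k] H :=
  (LinearMap.rTensor H (Δ3 k H)) ∘ₗ Coalgebra.comul

/-- Left-nested fivefold comultiplication. -/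
def Δ5 : H →ₗ[k] (((H ⊗[k] H) ⊗[k] H) ⊗[k] H) ⊗[k] H :=
  (LinearMap.rTensor H (Δ4 k H)) ∘ₗ Coalgebra.comul

/-- Left-nested sixfold comultiplication. -/
def Δ6 : H →ₗ[k] ((((H ⊗[k] H) ⊗[k] H) ⊗[k] H) ⊗[k] H) ⊗[k] H :=
  (LinearMap.rTensor H (Δ5 k H)) ∘ₗ Coalgebra.comul

/-- `IsRep2 k H h h1 h2` says that `Δh = ∑ᵢ h1 i ⊗ h2 i`, i.e. the families `h1, h2`
realise the Sweedler legs `h₍₁₎ ⊗ h₍₂₎`. -/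
def IsRep2 {n : ℕ} (h : H) (h1 h2 : Fin n → H) : Prop :=
  Coalgebra.comul (R := k) h = ∑ i, h1 i ⊗ₜ[k] h2 i

/-- A representation of the Sweedler legs `h₍₁₎ ⊗ h₍₂₎ ⊗ h₍₃₎`. -/
def IsRep3 {n : ℕ} (h : H) (h1 h2 h3 : Fin n → H) : Prop :=
  Δ3 k H h = ∑ i, (h1 i ⊗ₜ[k] h2 i) ⊗ₜ[k] h3 i

/-- A representation of the Sweedler legs `h₍₁₎ ⊗ h₍₂₎ ⊗ h₍₃₎ ⊗ h₍₄₎`. -/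
def IsRep4 {n : ℕ} (h : H) (h1 h2 h3 h4 : Fin n → H) : Prop :=
  Δ4 k H h = ∑ i, ((h1 i ⊗ₜ[k] h2 i) ⊗ₜ[k] h3 i) ⊗ₜ[k] h4 i

/-- A representation of the Sweedler legs `h₍₁₎ ⊗ ⋯ ⊗ h₍₅₎`. -/
def IsRep5 {n : ℕ} (h : H) (h1 h2 h3 h4 h5 : Fin n → H) : Prop :=
  Δ5 k H h = ∑ i, (((h1 i ⊗ₜ[k] h2 i) ⊗ₜ[k] h3 i) ⊗ₜ[k] h4 i) ⊗ₜ[k] h5 i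

/-- A representation of the Sweedler legs `h₍₁₎ ⊗ ⋯ ⊗ h₍₆₎`. -/
def IsRep6 {n : ℕ} (h : H) (h1 h2 h3 h4 h5 h6 : Fin n → H) : Prop :=
  Δ6 k H h = ∑ i, ((((h1 i ⊗ₜ[k] h2 i) ⊗ₜ[k] h3 i) ⊗ₜ[k] h4 i) ⊗ₜ[k] h5 i) ⊗ₜ[k] h6 i

/-- A Drinfeld 2-cocycle `χ : H ⊗ H → k` with convolution inverse `χi`. -/
structure DrinfeldCocycle (χ χi : H →ₗ[k] H →ₗ[k] k) : Prop where
  conv_left : ∀ (h g : H) {n m : ℕ} (h1 h2 : Fin n → H) (g1 g2 : Fin m → H),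
    IsRep2 k H h h1 h2 → IsRep2 k H g g1 g2 →
    ∑ i, ∑ j, χ (h1 i) (g1 j) * χi (h2 i) (g2 j)
      = Coalgebra.counit (R := k) h * Coalgebra.counit (R := k) g
  conv_right : ∀ (h g : H) {n m : ℕ} (h1 h2 : Fin n → H) (g1 g2 : Fin m → H),
    IsRep2 k H h h1 h2 → IsRep2 k H g g1 g2 →
    ∑ i, ∑ j, χi (h1 i) (g1 j) * χ (h2 i) (g2 j)
      = Coalgebra.counit (R := k) h * Coalgebra.counit (R := k) g
  cocycle : ∀ (h g f : H) {n m p : ℕ} (h1 h2 : Fin n → H) (g1 g2 : Fin m → H)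
      (f1 f2 : Fin p → H),
    IsRep2 k H h h1 h2 → IsRep2 k H g g1 g2 → IsRep2 k H f f1 f2 →
    ∑ j, ∑ l, χ (g1 j) (f1 l) * χ h (g2 j * f2 l)
      = ∑ i, ∑ j, χ (h1 i) (g1 j) * χ (h2 i * g2 j) f
  one_cocy : ∀ h : H, χ 1 h = Coalgebra.counit (R := k) h
  cocy_one : ∀ h : H, χ h 1 = Coalgebra.counit (R := k) h

/-- The twisted product `h • g = χ(h₍₁₎,g₍₁₎) h₍₂₎g₍₂₎ χ⁻¹(h₍₃₎,g₍₃₎)` of the Drinfeld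
cotwist `H^χ`, given as a bilinear map `tmul`. -/
def IsTwistedMul (χ χi : H →ₗ[k] H →ₗ[k] k) (tmul : H →ₗ[k] H →ₗ[k] H) : Prop :=
  ∀ (h g : H) {n m : ℕ} (h1 h2 h3 : Fin n → H) (g1 g2 g3 : Fin m → H),
    IsRep3 k H h h1 h2 h3 → IsRep3 k H g g1 g2 g3 →
    tmul h g = ∑ i, ∑ j, (χ (h1 i) (g1 j) * χi (h3 i) (g3 j)) • (h2 i * g2 j)

/-- A coquasitriangular structure `r` on `H`, with convolution inverse `ri`. -/
structure Coquasitriangular (r ri : H →ₗ[k] H →ₗ[k] k) : Prop where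
  conv_left : ∀ (h g : H) {n m : ℕ} (h1 h2 : Fin n → H) (g1 g2 : Fin m → H),
    IsRep2 k H h h1 h2 → IsRep2 k H g g1 g2 →
    ∑ i, ∑ j, r (h1 i) (g1 j) * ri (h2 i) (g2 j)
      = Coalgebra.counit (R := k) h * Coalgebra.counit (R := k) g
  conv_right : ∀ (h g : H) {n m : ℕ} (h1 h2 : Fin n → H) (g1 g2 : Fin m → H),
    IsRep2 k H h h1 h2 → IsRep2 k H g g1 g2 →
    ∑ i, ∑ j, ri (h1 i) (g1 j) * r (h2 i) (g2 j)
      = Coalgebra.counit (R := k) h * Coalgebra.counit (R := k) g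
  braid : ∀ (h g : H) {n m : ℕ} (h1 h2 : Fin n → H) (g1 g2 : Fin m → H),
    IsRep2 k H h h1 h2 → IsRep2 k H g g1 g2 →
    ∑ i, ∑ j, r (h2 i) (g2 j) • (g1 j * h1 i) = ∑ i, ∑ j, r (h1 i) (g1 j) • (h2 i * g2 j)
  mul_right : ∀ (h g f : H) {n : ℕ} (h1 h2 : Fin n → H), IsRep2 k H h h1 h2 →
    r h (g * f) = ∑ i, r (h1 i) g * r (h2 i) f
  mul_left : ∀ (h g f : H) {n : ℕ} (f1 f2 : Fin n → H), IsRep2 k H f f1 f2 →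
    r (h * g) f = ∑ i, r h (f1 i) * r g (f2 i)

variable (B : Type*) [Ring B] [Algebra k B]

/-- `u, ui : H → B` are convolution inverses of each other. -/
def ConvInv (u ui : H →ₗ[k] B) : Prop :=
  ∀ (h : H) {n : ℕ} (h1 h2 : Fin n → H), IsRep2 k H h h1 h2 →
    ∑ i, u (h1 i) * ui (h2 i) = Coalgebra.counit (R := k) h • (1 : B)
    ∧ ∑ i, ui (h1 i) * u (h2 i) = Coalgebra.counit (R := k) h • (1 : B)

/-- A measuring of `H` on `B`:  `h ▷ (ab) = (h₍₁₎ ▷ a)(h₍₂₎ ▷ b)` and `h ▷ 1 = ε(h)1`. -/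
structure Measuring (act : H →ₗ[k] B →ₗ[k] B) : Prop where
  act_mul : ∀ (h : H) (a b : B) {n : ℕ} (h1 h2 : Fin n → H),
    IsRep2 k H h h1 h2 → act h (a * b) = ∑ i, act (h1 i) a * act (h2 i) b
  act_one : ∀ h : H, act h 1 = Coalgebra.counit (R := k) h • (1 : B)

/-- A cocycle datum `(▷, σ)` (with chosen convolution inverse `σi` of `σ`). -/
structure CocycleDatum (act : H →ₗ[k] B →ₗ[k] B) (σ σi : H →ₗ[k] H →ₗ[k] B) : Prop where
  toMeasuring : Measuring k H B act
  conv_left : ∀ (h g : H) {n m : ℕ} (h1 h2 : Fin n → H) (g1 g2 : Fin m → H),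
    IsRep2 k H h h1 h2 → IsRep2 k H g g1 g2 →
    ∑ i, ∑ j, σ (h1 i) (g1 j) * σi (h2 i) (g2 j)
      = (Coalgebra.counit (R := k) h * Coalgebra.counit (R := k) g) • (1 : B)
  conv_right : ∀ (h g : H) {n m : ℕ} (h1 h2 : Fin n → H) (g1 g2 : Fin m → H),
    IsRep2 k H h h1 h2 → IsRep2 k H g g1 g2 →
    ∑ i, ∑ j, σi (h1 i) (g1 j) * σ (h2 i) (g2 j)
      = (Coalgebra.counit (R := k) h * Coalgebra.counit (R := k) g) • (1 : B)
  one_act : ∀ b : B, act 1 b = b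
  act_act : ∀ (h g : H) (b : B) {n m : ℕ} (h1 h2 h3 : Fin n → H) (g1 g2 g3 : Fin m → H),
    IsRep3 k H h h1 h2 h3 → IsRep3 k H g g1 g2 g3 →
    act h (act g b) = ∑ i, ∑ j, σ (h1 i) (g1 j) * act (h2 i * g2 j) b * σi (h3 i) (g3 j)
  sigma_one : ∀ h : H, σ h 1 = Coalgebra.counit (R := k) h • (1 : B)
  one_sigma : ∀ h : H, σ 1 h = Coalgebra.counit (R := k) h • (1 : B)
  cocycle : ∀ (h g f : H) {n m p : ℕ} (h1 h2 : Fin n → H) (g1 g2 : Fin m → H)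
      (f1 f2 : Fin p → H),
    IsRep2 k H h h1 h2 → IsRep2 k H g g1 g2 → IsRep2 k H f f1 f2 →
    ∑ i, ∑ j, ∑ l, act (h1 i) (σ (g1 j) (f1 l)) * σ (h2 i) (g2 j * f2 l)
      = ∑ i, ∑ j, σ (h1 i) (g1 j) * σ (h2 i * g2 j) f

/-- The cocycle cross product multiplication on `P = B ⊗ H`:
`(b#h)(c#g) = b(h₍₁₎▷c)σ(h₍₂₎,g₍₁₎) # h₍₃₎g₍₂₎`, given as a bilinear map `mult`. -/
def IsCrossMul (act : H →ₗ[k] B →ₗ[k] B) (σ : H →ₗ[k] H →ₗ[k] B)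
    (mult : B ⊗[k] H →ₗ[k] B ⊗[k] H →ₗ[k] B ⊗[k] H) : Prop :=
  ∀ (b c : B) (h g : H) {n m : ℕ} (h1 h2 h3 : Fin n → H) (g1 g2 : Fin m → H),
    IsRep3 k H h h1 h2 h3 → IsRep2 k H g g1 g2 →
    mult (b ⊗ₜ[k] h) (c ⊗ₜ[k] g)
      = ∑ i, ∑ j, (b * act (h1 i) c * σ (h2 i) (g1 j)) ⊗ₜ[k] (h3 i * g2 j)

end SweedlerDefs

section HopfDefs

variable (k : Type*) [Field k]
variable (H : Type*) [Ring H] [HopfAlgebra k H]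
variable (B : Type*) [Ring B] [Algebra k B]

/-- The cocycle Hopf algebroid multiplication on `B ⊗ B ⊗ H`:
`(b⊗b'⊗h)(c⊗c'⊗g) = b(h₍₁₎▷c)σ(h₍₂₎,g₍₁₎) ⊗ c'(S(g₍₄₎)▷b')σ(S(g₍₃₎),S(h₍₄₎)) ⊗ h₍₃₎g₍₂₎`,
given as a bilinear map `mult`. -/
def IsAlgebroidMul (act : H →ₗ[k] B →ₗ[k] B) (σ : H →ₗ[k] H →ₗ[k] B)
    (mult : B ⊗[k] (B ⊗[k] H) →ₗ[k] B ⊗[k] (B ⊗[k] H) →ₗ[k] B ⊗[k] (B ⊗[k] H)) : Prop :=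
  ∀ (b b' c c' : B) (h g : H) {n m : ℕ}
    (h1 h2 h3 h4 : Fin n → H) (g1 g2 g3 g4 : Fin m → H),
    IsRep4 k H h h1 h2 h3 h4 → IsRep4 k H g g1 g2 g3 g4 →
    mult (b ⊗ₜ[k] (b' ⊗ₜ[k] h)) (c ⊗ₜ[k] (c' ⊗ₜ[k] g))
      = ∑ i, ∑ j, (b * act (h1 i) c * σ (h2 i) (g1 j)) ⊗ₜ[k]
          ((c' * act (HopfAlgebra.antipode (R := k) (g4 j)) b'
              * σ (HopfAlgebra.antipode (R := k) (g3 j))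
                  (HopfAlgebra.antipode (R := k) (h4 i))) ⊗ₜ[k] (h3 i * g2 j))

end HopfDefs

section Statements

variable {k : Type*} [Field k]
variable {H : Type*} [Ring H] [HopfAlgebra k H]
variable {B : Type*} [Ring B] [Algebra k B]

/-- The trivial action `h ▷ b = ε(h)b` as a bilinear map. -/
def trivialAction (k : Type*) [Field k] (H : Type*) [Ring H] [HopfAlgebra k H]
    (B : Type*) [Ring B] [Algebra k B] : H →ₗ[k] B →ₗ[k] B :=
  (LinearMap.lsmul k B) ∘ₗ (Coalgebra.counit (R := k) (A := H))

/-! ### Convolution algebras and pull-backs along coalgebra maps -/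

section ConvolutionTools

open WithConv

variable {C : Type*} [AddCommGroup C] [Module k C] [Coalgebra k C]
variable {D : Type*} [AddCommGroup D] [Module k D] [Coalgebra k D]

/-- Pull-back along a coalgebra map, a homomorphism of convolution monoids. -/
def convPull (φ : C →ₗc[k] D) : WithConv (D →ₗ[k] B) →* WithConv (C →ₗ[k] B) where
  toFun F := toConv (F.ofConv ∘ₗ φ.toLinearMap)
  map_one' := by
    ext x
    simp [LinearMap.convOne_def]
  map_mul' F G := by
    rw [LinearMap.convMul_comp_coalgHom_distrib]

lemma convPull_apply (φ : C →ₗc[k] D) (F : WithConv (D →ₗ[k] B)) (x : C) :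
    convPull φ F x = F (φ x) := rfl

/-- The element `x ↦ ε(x)b` of the convolution algebra. -/
def convConst (k : Type*) [Field k] (C : Type*) [AddCommGroup C] [Module k C] [Coalgebra k C]
    {B : Type*} [Ring B] [Algebra k B] (b : B) : WithConv (C →ₗ[k] B) :=
  toConv (LinearMap.toSpanSingleton k B b ∘ₗ Coalgebra.counit)

lemma convConst_apply (b : B) (x : C) :
    convConst k C b x = Coalgebra.counit (R := k) x • b := rfl

lemma exists_comul_eq (x : C) : ∃ (n : ℕ) (x1 x2 : Fin n → C),
    Coalgebra.comul (R := k) x = ∑ i, x1 i ⊗ₜ[k] x2 i := by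
  obtain ⟨S, hS⟩ := TensorProduct.exists_finset (R := k) (Coalgebra.comul (R := k) x)
  refine ⟨S.card, fun i => (S.equivFin.symm i).1.1, fun i => (S.equivFin.symm i).1.2, ?_⟩
  rw [hS, ← Finset.sum_coe_sort S]
  exact (Equiv.sum_comp S.equivFin.symm
    (fun p : S => (p : C × C).1 ⊗ₜ[k] (p : C × C).2)).symm

lemma sum_counit_smul_fst {n : ℕ} {x : C} {x1 x2 : Fin n → C}
    (hx : Coalgebra.comul (R := k) x = ∑ i, x1 i ⊗ₜ[k] x2 i) :
    ∑ i, Coalgebra.counit (R := k) (x2 i) • x1 i = x := by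
  have h := congrArg (TensorProduct.rid k C) (Coalgebra.lTensor_counit_comul (R := k) x)
  rw [hx] at h
  simpa using h

lemma sum_counit_smul_snd {n : ℕ} {x : C} {x1 x2 : Fin n → C}
    (hx : Coalgebra.comul (R := k) x = ∑ i, x1 i ⊗ₜ[k] x2 i) :
    ∑ i, Coalgebra.counit (R := k) (x1 i) • x2 i = x := by
  have h := congrArg (TensorProduct.lid k C) (Coalgebra.rTensor_counit_comul (R := k) x)
  rw [hx] at h
  simpa using h

lemma conv_mul_apply {n : ℕ} {x : C} {x1 x2 : Fin n → C}
    (hx : Coalgebra.comul (R := k) x = ∑ i, x1 i ⊗ₜ[k] x2 i) (F G : WithConv (C →ₗ[k] B)) :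
    (F * G) x = ∑ i, F (x1 i) * G (x2 i) := by
  simp [LinearMap.convMul_apply, hx]

lemma conv_mul_tmul_apply {n m : ℕ} {x : C} {x1 x2 : Fin n → C} {y : D} {y1 y2 : Fin m → D}
    (hx : Coalgebra.comul (R := k) x = ∑ i, x1 i ⊗ₜ[k] x2 i)
    (hy : Coalgebra.comul (R := k) y = ∑ i, y1 i ⊗ₜ[k] y2 i)
    (F G : WithConv (C ⊗[k] D →ₗ[k] B)) :
    (F * G) (x ⊗ₜ[k] y) = ∑ i, ∑ j, F (x1 i ⊗ₜ[k] y1 j) * G (x2 i ⊗ₜ[k] y2 j) := by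
  simp [LinearMap.convMul_apply, hx, hy, TensorProduct.sum_tmul, TensorProduct.tmul_sum]
  exact Finset.sum_comm

lemma conv_mul_tmul₃_apply {E : Type*} [AddCommGroup E] [Module k E] [Coalgebra k E]
    {n m p : ℕ} {x : C} {x1 x2 : Fin n → C} {y : D} {y1 y2 : Fin m → D}
    {z : E} {z1 z2 : Fin p → E}
    (hx : Coalgebra.comul (R := k) x = ∑ i, x1 i ⊗ₜ[k] x2 i)
    (hy : Coalgebra.comul (R := k) y = ∑ i, y1 i ⊗ₜ[k] y2 i)
    (hz : Coalgebra.comul (R := k) z = ∑ i, z1 i ⊗ₜ[k] z2 i)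
    (F G : WithConv ((C ⊗[k] D) ⊗[k] E →ₗ[k] B)) :
    (F * G) ((x ⊗ₜ[k] y) ⊗ₜ[k] z) = ∑ i, ∑ j, ∑ l,
      F ((x1 i ⊗ₜ[k] y1 j) ⊗ₜ[k] z1 l) * G ((x2 i ⊗ₜ[k] y2 j) ⊗ₜ[k] z2 l) := by
  simp only [LinearMap.convMul_apply, TensorProduct.comul_tmul, hx, hy, hz,
    TensorProduct.sum_tmul, TensorProduct.tmul_sum, map_sum,
    TensorProduct.AlgebraTensorModule.tensorTensorTensorComm_tmul, TensorProduct.map_tmul,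
    LinearMap.mul'_apply]
  rw [Finset.sum_comm, Finset.sum_congr rfl fun _ _ => Finset.sum_comm, Finset.sum_comm]

lemma mul_convConst_apply (F : WithConv (C →ₗ[k] B)) (b : B) (x : C) :
    (F * convConst k C b) x = F x * b := by
  obtain ⟨n, x1, x2, hx⟩ := exists_comul_eq (k := k) x
  rw [conv_mul_apply hx]
  conv_rhs => rw [← sum_counit_smul_fst hx]
  simp [convConst_apply, Finset.sum_mul]

lemma convConst_mul_apply (F : WithConv (C →ₗ[k] B)) (b : B) (x : C) :
    (convConst k C b * F) x = b * F x := by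
  obtain ⟨n, x1, x2, hx⟩ := exists_comul_eq (k := k) x
  rw [conv_mul_apply hx]
  conv_rhs => rw [← sum_counit_smul_snd hx]
  simp [convConst_apply, Finset.mul_sum]

variable (k C D) in
/-- The coalgebra map `x ⊗ y ↦ ε(y)x`. -/
def tensorFst : C ⊗[k] D →ₗc[k] C :=
  ((Coalgebra.TensorProduct.rid k k C : C ⊗[k] k ≃ₗc[k] C) : C ⊗[k] k →ₗc[k] C).comp
    (Coalgebra.TensorProduct.map (CoalgHom.id k C) (Coalgebra.counitCoalgHom k D))

variable (k C D) in
/-- The coalgebra map `x ⊗ y ↦ ε(x)y`. -/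
def tensorSnd : C ⊗[k] D →ₗc[k] D :=
  ((Coalgebra.TensorProduct.lid k D : k ⊗[k] D ≃ₗc[k] D) : k ⊗[k] D →ₗc[k] D).comp
    (Coalgebra.TensorProduct.map (Coalgebra.counitCoalgHom k C) (CoalgHom.id k D))

lemma tensorFst_tmul (x : C) (y : D) :
    tensorFst k C D (x ⊗ₜ[k] y) = Coalgebra.counit (R := k) y • x := rfl

lemma tensorSnd_tmul (x : C) (y : D) :
    tensorSnd k C D (x ⊗ₜ[k] y) = Coalgebra.counit (R := k) x • y := rfl

lemma fst_mul_snd_apply (F : WithConv (C →ₗ[k] B)) (G : WithConv (D →ₗ[k] B)) (x : C) (y : D) :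
    (convPull (tensorFst k C D) F * convPull (tensorSnd k C D) G) (x ⊗ₜ[k] y) = F x * G y := by
  obtain ⟨n, x1, x2, hx⟩ := exists_comul_eq (k := k) x
  obtain ⟨m, y1, y2, hy⟩ := exists_comul_eq (k := k) y
  rw [conv_mul_tmul_apply hx hy]
  conv_rhs => rw [← sum_counit_smul_fst hx, ← sum_counit_smul_snd hy]
  simp only [convPull_apply, tensorFst_tmul, tensorSnd_tmul, map_sum, map_smul,
    Finset.sum_mul_sum]
  refine Finset.sum_congr rfl fun i _ => Finset.sum_congr rfl fun j _ => ?_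
  simp only [smul_mul_smul_comm, mul_comm]

lemma snd_mul_fst_apply (F : WithConv (C →ₗ[k] B)) (G : WithConv (D →ₗ[k] B)) (x : C) (y : D) :
    (convPull (tensorSnd k C D) G * convPull (tensorFst k C D) F) (x ⊗ₜ[k] y) = G y * F x := by
  obtain ⟨n, x1, x2, hx⟩ := exists_comul_eq (k := k) x
  obtain ⟨m, y1, y2, hy⟩ := exists_comul_eq (k := k) y
  rw [conv_mul_tmul_apply hx hy]
  conv_rhs => rw [← sum_counit_smul_snd hx, ← sum_counit_smul_fst hy]
  simp only [convPull_apply, tensorFst_tmul, tensorSnd_tmul, map_sum, map_smul,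
    Finset.sum_mul_sum]
  rw [Finset.sum_comm]
  refine Finset.sum_congr rfl fun i _ => Finset.sum_congr rfl fun j _ => ?_
  simp only [smul_mul_smul_comm, mul_comm]

/-- Collapsing the middle leg of `h₍₁₎ ⊗ h₍₂₎ ⊗ h₍₃₎` with the counit leaves `Δh`. -/
lemma IsRep3.collapse {n : ℕ} {h : H} {h1 h2 h3 : Fin n → H} (hh : IsRep3 k H h h1 h2 h3) :
    IsRep2 k H h (fun i => Coalgebra.counit (R := k) (h2 i) • h1 i) h3 := by
  have key : ((TensorProduct.rid k H).toLinearMap ∘ₗ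
      LinearMap.lTensor H (Coalgebra.counit (R := k) (A := H))) ∘ₗ Coalgebra.comul
        = LinearMap.id := by
    ext x
    simp
  have h' := congrArg (LinearMap.rTensor H ((TensorProduct.rid k H).toLinearMap ∘ₗ
      LinearMap.lTensor H (Coalgebra.counit (R := k) (A := H)))) hh
  rw [Δ3, LinearMap.comp_apply, ← LinearMap.comp_apply (LinearMap.rTensor H _),
    ← LinearMap.rTensor_comp, key] at h'
  rw [IsRep2]
  simpa using h'

lemma conv_eq_one_iff {F : WithConv (C →ₗ[k] B)} :
    F = 1 ↔ ∀ x, F x = Coalgebra.counit (R := k) x • (1 : B) := by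
  constructor
  · rintro rfl x
    rw [LinearMap.convOne_apply, Algebra.algebraMap_eq_smul_one]
  · intro h
    ext x
    rw [h x, LinearMap.convOne_apply, Algebra.algebraMap_eq_smul_one]

/-- Conjugation by `a * b` and by `m` agree at `c` exactly when `b⁻¹ * a⁻¹ * m` commutes
with `c`. -/
lemma conj_eq_conj_iff {M : Type*} [Monoid M] (a b m : Mˣ) (c : M) :
    (a * b : M) * c * (↑b⁻¹ * ↑a⁻¹) = m * c * ↑m⁻¹ ↔
      (↑b⁻¹ * ↑a⁻¹ * m : M) * c = c * (↑b⁻¹ * ↑a⁻¹ * m) := by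
  rw [Units.eq_mul_inv_iff_mul_eq, ← Units.mul_right_inj (a * b)⁻¹, eq_comm]
  simp [mul_assoc]

/-- A convolution-invertible map as a unit of the convolution algebra. -/
def ConvInv.unit {u ui : H →ₗ[k] B} (hu : ConvInv k H B u ui) : (WithConv (H →ₗ[k] B))ˣ where
  val := toConv u
  inv := toConv ui
  val_inv := by
    refine conv_eq_one_iff.2 fun h => ?_
    obtain ⟨n, h1, h2, hh⟩ := exists_comul_eq (k := k) h
    rw [conv_mul_apply hh]
    exact (hu h h1 h2 hh).1
  inv_val := by
    refine conv_eq_one_iff.2 fun h => ?_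
    obtain ⟨n, h1, h2, hh⟩ := exists_comul_eq (k := k) h
    rw [conv_mul_apply hh]
    exact (hu h h1 h2 hh).2

end ConvolutionTools

/-! ### The units attached to `u` on `H ⊗ H` -/

section TwoLegs

open WithConv

/-- `h ⊗ g ↦ ε(g)u(h)` as a convolution unit. -/
def legA (v : (WithConv (H →ₗ[k] B))ˣ) : (WithConv (H ⊗[k] H →ₗ[k] B))ˣ :=
  Units.map (convPull (tensorFst k H H)) v

/-- `h ⊗ g ↦ ε(h)u(g)` as a convolution unit. -/
def legB (v : (WithConv (H →ₗ[k] B))ˣ) : (WithConv (H ⊗[k] H →ₗ[k] B))ˣ :=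
  Units.map (convPull (tensorSnd k H H)) v

/-- `h ⊗ g ↦ u(hg)` as a convolution unit. -/
def legM (v : (WithConv (H →ₗ[k] B))ˣ) : (WithConv (H ⊗[k] H →ₗ[k] B))ˣ :=
  Units.map (convPull (Bialgebra.mulCoalgHom k H)) v

/-- `σ^u` as the convolution unit `legB⁻¹ * legA⁻¹ * legM`. -/
def sigmaUnit (v : (WithConv (H →ₗ[k] B))ˣ) : (WithConv (H ⊗[k] H →ₗ[k] B))ˣ :=
  (legB v)⁻¹ * (legA v)⁻¹ * legM v

variable (v : (WithConv (H →ₗ[k] B))ˣ)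

lemma legA_mul_legB_apply (h g : H) :
    (legA v * legB v : WithConv (H ⊗[k] H →ₗ[k] B)) (h ⊗ₜ[k] g) = v.val h * v.val g :=
  fst_mul_snd_apply _ _ _ _

lemma legB_inv_mul_legA_inv_apply (h g : H) :
    (((legB v)⁻¹).val * ((legA v)⁻¹).val) (h ⊗ₜ[k] g) = v.inv g * v.inv h :=
  snd_mul_fst_apply _ _ _ _

lemma sigmaUnit_apply {n m : ℕ} {h g : H} {h1 h2 : Fin n → H} {g1 g2 : Fin m → H}
    (hh : IsRep2 k H h h1 h2) (hg : IsRep2 k H g g1 g2) :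
    (sigmaUnit v).val (h ⊗ₜ[k] g) =
      ∑ i, ∑ j, v.inv (g1 j) * v.inv (h1 i) * v.val (h2 i * g2 j) := by
  rw [sigmaUnit, Units.val_mul, Units.val_mul, conv_mul_tmul_apply hh hg]
  simp only [legB_inv_mul_legA_inv_apply]
  rfl

/-- `legM` is the product `legA * legB * σ^u`, i.e. `u(hg) = u(h₍₁₎)u(g₍₁₎)σ^u(h₍₂₎,g₍₂₎)`. -/
lemma legM_eq : legM v = legA v * legB v * sigmaUnit v := by
  simp [sigmaUnit, mul_assoc]

lemma conv_ext₂ {F G : WithConv (H ⊗[k] H →ₗ[k] B)}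
    (e : ∀ h g, F (h ⊗ₜ[k] g) = G (h ⊗ₜ[k] g)) : F = G :=
  ofConv_injective (TensorProduct.ext' e)

/-- The value of the conjugate is `(hg) ▷ c`. -/
lemma legM_conj_apply (c : B) (h g : H) :
    ((legM v).val * convConst k (H ⊗[k] H) c * ((legM v)⁻¹).val) (h ⊗ₜ[k] g) =
      (v.val * convConst k H c * (v⁻¹).val) (h * g) := by
  have e : convConst k (H ⊗[k] H) c = convPull (Bialgebra.mulCoalgHom k H) (convConst k H c) := by
    refine conv_ext₂ fun x y => ?_
    rw [convPull_apply]
    simp [convConst_apply, mul_comm]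
  rw [e]
  change (convPull (Bialgebra.mulCoalgHom k H) v.val *
    convPull (Bialgebra.mulCoalgHom k H) (convConst k H c) *
    convPull (Bialgebra.mulCoalgHom k H) (v⁻¹).val) (h ⊗ₜ[k] g) = _
  rw [← map_mul, ← map_mul, convPull_apply]
  rfl

/-- The value of the conjugate is `h ▷ (g ▷ c)`. -/
lemma legAB_conj_apply (c : B) {h g : H} {n m : ℕ} {h1 h2 : Fin n → H} {g1 g2 : Fin m → H}
    (hh : IsRep2 k H h h1 h2) (hg : IsRep2 k H g g1 g2) :
    (((legA v).val * (legB v).val) * convConst k (H ⊗[k] H) c *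
        (((legB v)⁻¹).val * ((legA v)⁻¹).val)) (h ⊗ₜ[k] g) =
      ∑ i, v.val (h1 i) * (∑ j, v.val (g1 j) * c * v.inv (g2 j)) * v.inv (h2 i) := by
  rw [conv_mul_tmul_apply hh hg]
  simp only [mul_convConst_apply, legA_mul_legB_apply, legB_inv_mul_legA_inv_apply]
  simp only [Finset.mul_sum, Finset.sum_mul, mul_assoc]

end TwoLegs

/-! ### The cocycle identity on `H ⊗ H ⊗ H` -/

section ThreeLegs

open WithConv

variable (v : (WithConv (H →ₗ[k] B))ˣ)

/-- The coalgebra map `(h ⊗ g) ⊗ f ↦ hg ⊗ f`. -/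
def mulLeftLegs (k : Type*) [Field k] (H : Type*) [Ring H] [HopfAlgebra k H] :
    (H ⊗[k] H) ⊗[k] H →ₗc[k] H ⊗[k] H :=
  Coalgebra.TensorProduct.map (Bialgebra.mulCoalgHom k H) (CoalgHom.id k H)

/-- The coalgebra map `(h ⊗ g) ⊗ f ↦ h ⊗ gf`. -/
def mulRightLegs (k : Type*) [Field k] (H : Type*) [Ring H] [HopfAlgebra k H] :
    (H ⊗[k] H) ⊗[k] H →ₗc[k] H ⊗[k] H :=
  (Coalgebra.TensorProduct.map (CoalgHom.id k H) (Bialgebra.mulCoalgHom k H)).comp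
    ((Coalgebra.TensorProduct.assoc k k H H H : (H ⊗[k] H) ⊗[k] H ≃ₗc[k] H ⊗[k] (H ⊗[k] H)) :
      (H ⊗[k] H) ⊗[k] H →ₗc[k] H ⊗[k] (H ⊗[k] H))

/-- The coalgebra map `(h ⊗ g) ⊗ f ↦ ε(h) g ⊗ f`. -/
def lastLegs (k : Type*) [Field k] (H : Type*) [Ring H] [HopfAlgebra k H] :
    (H ⊗[k] H) ⊗[k] H →ₗc[k] H ⊗[k] H :=
  Coalgebra.TensorProduct.map (tensorSnd k H H) (CoalgHom.id k H)

lemma convPull_congr {C D E E' : Type*} [AddCommGroup C] [Module k C] [Coalgebra k C]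
    [AddCommGroup D] [Module k D] [Coalgebra k D] [AddCommGroup E] [Module k E] [Coalgebra k E]
    [AddCommGroup E'] [Module k E'] [Coalgebra k E']
    {φ : C →ₗc[k] D} {ψ : D →ₗc[k] E} {φ' : C →ₗc[k] E'} {ψ' : E' →ₗc[k] E}
    (e : ∀ x, ψ (φ x) = ψ' (φ' x)) (F : (WithConv (E →ₗ[k] B))ˣ) :
    Units.map (convPull φ) (Units.map (convPull ψ) F) =
      Units.map (convPull φ') (Units.map (convPull ψ') F) := by
  ext x
  exact congrArg F.val.ofConv (e x)

lemma tensor_ext₃ {C : Type*} [AddCommGroup C] [Module k C] {f g : (H ⊗[k] H) ⊗[k] H →ₗ[k] C}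
    (e : ∀ x y z, f ((x ⊗ₜ[k] y) ⊗ₜ[k] z) = g ((x ⊗ₜ[k] y) ⊗ₜ[k] z)) (t) : f t = g t := by
  rw [TensorProduct.ext_threefold e]

/-- The cocycle identity `σ^u(g₍₁₎,f₍₁₎)σ^u(h,g₍₂₎f₍₂₎) = σ^u(h₍₁₎,g₍₁₎)σ^u(h₍₂₎g₍₂₎,f)` in the
convolution algebra of `H ⊗ H ⊗ H`. Both sides, multiplied on the left by
`(h,g,f) ↦ u(h₍₁₎)u(g₍₁₎)u(f₍₁₎)`, give `u(hgf)`. -/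
lemma sigma_cocycle
    (hc : ∀ (h g : H) (b : B), (sigmaUnit v).val (h ⊗ₜ[k] g) * b
      = b * (sigmaUnit v).val (h ⊗ₜ[k] g)) :
    Units.map (convPull (lastLegs k H)) (sigmaUnit v) *
        Units.map (convPull (mulRightLegs k H)) (sigmaUnit v)
      = Units.map (convPull (tensorFst k (H ⊗[k] H) H)) (sigmaUnit v) *
        Units.map (convPull (mulLeftLegs k H)) (sigmaUnit v) := by
  set P12 := Units.map (convPull (B := B) (tensorFst k (H ⊗[k] H) H)) with hP12
  set P23 := Units.map (convPull (B := B) (lastLegs k H)) with hP23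
  set M12 := Units.map (convPull (B := B) (mulLeftLegs k H)) with hM12
  set M23 := Units.map (convPull (B := B) (mulRightLegs k H)) with hM23
  -- associativity of the product of `H`
  have e0 : M12 (legM v) = M23 (legM v) := by
    refine convPull_congr (fun t => ?_) v
    refine tensor_ext₃
      (f := (Bialgebra.mulCoalgHom k H).toLinearMap ∘ₗ (mulLeftLegs k H).toLinearMap)
      (g := (Bialgebra.mulCoalgHom k H).toLinearMap ∘ₗ (mulRightLegs k H).toLinearMap)
      (fun x y z => ?_) t
    exact mul_assoc x y z
  have e1 : M12 (legA v) = P12 (legM v) := by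
    refine convPull_congr (fun t => ?_) v
    refine tensor_ext₃
      (f := (tensorFst k H H).toLinearMap ∘ₗ (mulLeftLegs k H).toLinearMap)
      (g := (Bialgebra.mulCoalgHom k H).toLinearMap ∘ₗ (tensorFst k (H ⊗[k] H) H).toLinearMap)
      (fun x y z => ?_) t
    exact (map_smul (LinearMap.mul' k H) (Coalgebra.counit (R := k) z) (x ⊗ₜ[k] y)).symm
  have e2 : M12 (legB v) = P23 (legB v) := by
    refine convPull_congr (fun t => ?_) v
    refine tensor_ext₃
      (f := (tensorSnd k H H).toLinearMap ∘ₗ (mulLeftLegs k H).toLinearMap)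
      (g := (tensorSnd k H H).toLinearMap ∘ₗ (lastLegs k H).toLinearMap)
      (fun x y z => ?_) t
    change Coalgebra.counit (R := k) (x * y) • z
      = Coalgebra.counit (R := k) (Coalgebra.counit (R := k) x • y) • z
    simp
  have e3 : M23 (legA v) = P12 (legA v) := by
    refine convPull_congr (fun t => ?_) v
    refine tensor_ext₃
      (f := (tensorFst k H H).toLinearMap ∘ₗ (mulRightLegs k H).toLinearMap)
      (g := (tensorFst k H H).toLinearMap ∘ₗ (tensorFst k (H ⊗[k] H) H).toLinearMap)
      (fun x y z => ?_) t
    change Coalgebra.counit (R := k) (y * z) • x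
      = tensorFst k H H (Coalgebra.counit (R := k) z • (x ⊗ₜ[k] y))
    simp [tensorFst_tmul, smul_smul, mul_comm]
  have e4 : M23 (legB v) = P23 (legM v) := by
    refine convPull_congr (fun t => ?_) v
    refine tensor_ext₃
      (f := (tensorSnd k H H).toLinearMap ∘ₗ (mulRightLegs k H).toLinearMap)
      (g := (Bialgebra.mulCoalgHom k H).toLinearMap ∘ₗ (lastLegs k H).toLinearMap)
      (fun x y z => ?_) t
    change Coalgebra.counit (R := k) x • (y * z) = (Coalgebra.counit (R := k) x • y) * z
    simp
  have e5 : P23 (legA v) = P12 (legB v) := by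
    refine convPull_congr (fun t => ?_) v
    refine tensor_ext₃
      (f := (tensorFst k H H).toLinearMap ∘ₗ (lastLegs k H).toLinearMap)
      (g := (tensorSnd k H H).toLinearMap ∘ₗ (tensorFst k (H ⊗[k] H) H).toLinearMap)
      (fun x y z => ?_) t
    change Coalgebra.counit (R := k) z • (Coalgebra.counit (R := k) x • y)
      = tensorSnd k H H (Coalgebra.counit (R := k) z • (x ⊗ₜ[k] y))
    simp [tensorSnd_tmul]
  -- `σ^u(h,g)` and `u(f)` live on different legs, so pointwise centrality makes them commute;
  -- without cocommutativity it would not suffice for maps sharing a leg.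
  have e6 : P12 (sigmaUnit v) * P23 (legB v) = P23 (legB v) * P12 (sigmaUnit v) := by
    have e7 : P23 (legB v) = Units.map (convPull (tensorSnd k (H ⊗[k] H) H)) v := by
      refine Units.ext (ofConv_injective (TensorProduct.ext_threefold fun x y z => ?_))
      change v.val.ofConv (Coalgebra.counit (R := k) (Coalgebra.counit (R := k) x • y) • z)
        = v.val.ofConv (Coalgebra.counit (R := k) (x ⊗ₜ[k] y) • z)
      simp [mul_comm]
    rw [e7]
    refine Units.ext (ofConv_injective (TensorProduct.ext_threefold fun x y z => ?_))
    refine (fst_mul_snd_apply _ _ _ _).trans (Eq.trans ?_ (snd_mul_fst_apply _ _ _ _).symm)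
    exact hc x y _
  have l12 : M12 (legM v) = P12 (legA v) * P12 (legB v) * P23 (legB v) *
      (P12 (sigmaUnit v) * M12 (sigmaUnit v)) := by
    conv_lhs => rw [legM_eq, map_mul, map_mul, e1, e2, legM_eq, map_mul, map_mul]
    simp only [mul_assoc]
    rw [← mul_assoc (P12 (sigmaUnit v)), e6]
    simp only [mul_assoc]
  have l23 : M23 (legM v) = P12 (legA v) * P12 (legB v) * P23 (legB v) *
      (P23 (sigmaUnit v) * M23 (sigmaUnit v)) := by
    conv_lhs => rw [legM_eq, map_mul, map_mul, e3, e4, legM_eq, map_mul, map_mul, e5]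
    simp only [mul_assoc]
  exact mul_left_cancel (l23.symm.trans (e0.symm.trans l12))

lemma cocycle_left_apply {n m p : ℕ} {h g f : H} {h1 h2 : Fin n → H} {g1 g2 : Fin m → H}
    {f1 f2 : Fin p → H} (hh : IsRep2 k H h h1 h2) (hg : IsRep2 k H g g1 g2)
    (hf : IsRep2 k H f f1 f2) (F : WithConv (H ⊗[k] H →ₗ[k] B)) :
    (convPull (lastLegs k H) F * convPull (mulRightLegs k H) F) ((h ⊗ₜ[k] g) ⊗ₜ[k] f) =
      ∑ i, ∑ j, ∑ l, (Coalgebra.counit (R := k) (h1 i) • F (g1 j ⊗ₜ[k] f1 l)) *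
        F (h2 i ⊗ₜ[k] (g2 j * f2 l)) := by
  rw [conv_mul_tmul₃_apply hh hg hf]
  refine Finset.sum_congr rfl fun i _ => Finset.sum_congr rfl fun j _ =>
    Finset.sum_congr rfl fun l _ => ?_
  congr 1
  change F ((Coalgebra.counit (R := k) (h1 i) • g1 j) ⊗ₜ[k] f1 l) = _
  rw [← TensorProduct.smul_tmul', map_smul]

lemma cocycle_right_apply {n m : ℕ} {h g f : H} {h1 h2 : Fin n → H} {g1 g2 : Fin m → H}
    (hh : IsRep2 k H h h1 h2) (hg : IsRep2 k H g g1 g2)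
    (F : WithConv (H ⊗[k] H →ₗ[k] B)) :
    (convPull (tensorFst k (H ⊗[k] H) H) F * convPull (mulLeftLegs k H) F)
        ((h ⊗ₜ[k] g) ⊗ₜ[k] f) =
      ∑ i, ∑ j, F (h1 i ⊗ₜ[k] g1 j) * F ((h2 i * g2 j) ⊗ₜ[k] f) := by
  obtain ⟨p, f1, f2, hf⟩ := exists_comul_eq (k := k) f
  rw [conv_mul_tmul₃_apply hh hg hf]
  refine Finset.sum_congr rfl fun i _ => Finset.sum_congr rfl fun j _ => ?_
  conv_rhs => rw [← sum_counit_smul_snd hf]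
  rw [TensorProduct.tmul_sum, map_sum, Finset.mul_sum]
  refine Finset.sum_congr rfl fun l _ => ?_
  change F (Coalgebra.counit (R := k) (f1 l) • (h1 i ⊗ₜ[k] g1 j)) *
    F ((h2 i * g2 j) ⊗ₜ[k] f2 l) = _
  rw [map_smul, TensorProduct.tmul_smul, map_smul, smul_mul_assoc, mul_smul_comm]

end ThreeLegs

/-! ### Actions, centrality and the cocycle datum -/

/-- Example 2.8:  for convolution-invertible unital `u : H → B` with
`h ▷ b = u(h₍₁₎) b u⁻¹(h₍₂₎)`, the map `▷` is an action iff
`u⁻¹(g₍₁₎)u⁻¹(h₍₁₎)u(h₍₂₎g₍₂₎) ∈ Z(B)`, and in that case the trivial action together with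
`σ^u(h,g) = u⁻¹(g₍₁₎)u⁻¹(h₍₁₎)u(h₍₂₎g₍₂₎)` is a cocycle datum of associative type. -/
theorem statement8 (u ui : H →ₗ[k] B) (hu : ConvInv k H B u ui) (hu1 : u 1 = 1)
    (act : H →ₗ[k] B →ₗ[k] B)
    (hact : ∀ (h : H) (b : B) {n : ℕ} (h1 h2 : Fin n → H), IsRep2 k H h h1 h2 →
      act h b = ∑ i, u (h1 i) * b * ui (h2 i))
    (σu : H →ₗ[k] H →ₗ[k] B)
    (hσu : ∀ (h g : H) {n m : ℕ} (h1 h2 : Fin n → H) (g1 g2 : Fin m → H),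
      IsRep2 k H h h1 h2 → IsRep2 k H g g1 g2 →
      σu h g = ∑ i, ∑ j, ui (g1 j) * ui (h1 i) * u (h2 i * g2 j)) :
    -- (1)
    ((∀ (h g : H) (b : B), act h (act g b) = act (h * g) b)
      ↔ (∀ (h g : H) {n m : ℕ} (h1 h2 : Fin n → H) (g1 g2 : Fin m → H),
          IsRep2 k H h h1 h2 → IsRep2 k H g g1 g2 →
          (∑ i, ∑ j, ui (g1 j) * ui (h1 i) * u (h2 i * g2 j)) ∈ Set.center B))
    ∧
    -- (2)
    ((∀ (h g : H) {n m : ℕ} (h1 h2 : Fin n → H) (g1 g2 : Fin m → H),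
        IsRep2 k H h h1 h2 → IsRep2 k H g g1 g2 →
        (∑ i, ∑ j, ui (g1 j) * ui (h1 i) * u (h2 i * g2 j)) ∈ Set.center B) →
      ∃ σui : H →ₗ[k] H →ₗ[k] B,
        CocycleDatum k H B (trivialAction k H B) σu σui
        ∧ (∀ (h g : H) (b : B),
            trivialAction k H B h (trivialAction k H B g b)
              = trivialAction k H B (h * g) b)) := by
  set v := hu.unit with hv
  have hact' : ∀ (h : H) (b : B), act h b = (v.val * convConst k H b * (v⁻¹).val) h := by
    intro h b
    obtain ⟨n, h1, h2, hh⟩ := exists_comul_eq (k := k) h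
    rw [conv_mul_apply hh, hact h b h1 h2 hh]
    simp only [mul_convConst_apply]
    rfl
  have hσ : ∀ h g : H, σu h g = (sigmaUnit v).val (h ⊗ₜ[k] g) := by
    intro h g
    obtain ⟨n, h1, h2, hh⟩ := exists_comul_eq (k := k) h
    obtain ⟨m, g1, g2, hg⟩ := exists_comul_eq (k := k) g
    rw [sigmaUnit_apply v hh hg, hσu h g h1 h2 g1 g2 hh hg]
    rfl
  -- the centrality condition in terms of the values of `σu`
  have hcen : (∀ (h g : H) {n m : ℕ} (h1 h2 : Fin n → H) (g1 g2 : Fin m → H),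
        IsRep2 k H h h1 h2 → IsRep2 k H g g1 g2 →
        (∑ i, ∑ j, ui (g1 j) * ui (h1 i) * u (h2 i * g2 j)) ∈ Set.center B) ↔
      ∀ (h g : H) (b : B), (sigmaUnit v).val (h ⊗ₜ[k] g) * b
        = b * (sigmaUnit v).val (h ⊗ₜ[k] g) := by
    constructor
    · intro hc h g b
      obtain ⟨n, h1, h2, hh⟩ := exists_comul_eq (k := k) h
      obtain ⟨m, g1, g2, hg⟩ := exists_comul_eq (k := k) g
      have := hc h g h1 h2 g1 g2 hh hg
      rw [← hσu h g h1 h2 g1 g2 hh hg, hσ] at this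
      exact (Semigroup.mem_center_iff.1 this b).symm
    · intro hc h g n m h1 h2 g1 g2 hh hg
      rw [← hσu h g h1 h2 g1 g2 hh hg, hσ]
      exact Semigroup.mem_center_iff.2 fun b => (hc h g b).symm
  rw [hcen]
  constructor
  · have hl : ∀ (h g : H) (b : B), act h (act g b) =
        (((legA v).val * (legB v).val) * convConst k (H ⊗[k] H) b *
          (((legB v)⁻¹).val * ((legA v)⁻¹).val)) (h ⊗ₜ[k] g) := by
      intro h g b
      obtain ⟨n, h1, h2, hh⟩ := exists_comul_eq (k := k) h
      obtain ⟨m, g1, g2, hg⟩ := exists_comul_eq (k := k) g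
      rw [legAB_conj_apply v b hh hg, hact h _ h1 h2 hh, hact g b g1 g2 hg]
      rfl
    have hr : ∀ (h g : H) (b : B), act (h * g) b =
        ((legM v).val * convConst k (H ⊗[k] H) b * ((legM v)⁻¹).val) (h ⊗ₜ[k] g) := by
      intro h g b
      rw [legM_conj_apply, hact']
    have hiff := fun b : B =>
      conj_eq_conj_iff (legA v) (legB v) (legM v) (convConst k (H ⊗[k] H) b)
    constructor
    · intro ha h g b
      have e := (hiff b).1 (conv_ext₂ fun x y => by rw [← hl, ← hr, ha])
      have e' := congrArg (fun F => F.ofConv (h ⊗ₜ[k] g)) e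
      simp only [mul_convConst_apply, convConst_mul_apply] at e'
      exact e'
    · intro hc h g b
      rw [hl, hr]
      refine congrArg (fun F => F.ofConv (h ⊗ₜ[k] g)) ((hiff b).2 (conv_ext₂ fun x y => ?_))
      rw [mul_convConst_apply, convConst_mul_apply]
      exact hc x y b
  · intro hc
    have hrep1 : IsRep2 k H 1 (fun _ : Fin 1 => 1) (fun _ : Fin 1 => 1) := by
      simp [IsRep2, Algebra.TensorProduct.one_def]
    have hui1 : ui 1 = 1 := by
      simpa [hu1] using (hu 1 _ _ hrep1).1
    have htriv : ∀ (h : H) (b : B),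
        trivialAction k H B h b = Coalgebra.counit (R := k) h • b := fun _ _ => rfl
    let σui : H →ₗ[k] H →ₗ[k] B := TensorProduct.curry ((sigmaUnit v)⁻¹).val.ofConv
    have hσi : ∀ h g : H, σui h g = ((sigmaUnit v)⁻¹).val (h ⊗ₜ[k] g) := fun _ _ => rfl
    have hconv : ∀ (h g : H) {n m : ℕ} (h1 h2 : Fin n → H) (g1 g2 : Fin m → H),
        IsRep2 k H h h1 h2 → IsRep2 k H g g1 g2 →
        ∑ i, ∑ j, σu (h1 i) (g1 j) * σui (h2 i) (g2 j)
          = (Coalgebra.counit (R := k) h * Coalgebra.counit (R := k) g) • (1 : B) := by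
      intro h g n m h1 h2 g1 g2 hh hg
      simp only [hσ, hσi]
      rw [← conv_mul_tmul_apply hh hg, Units.mul_inv, LinearMap.convOne_apply,
        Algebra.algebraMap_eq_smul_one, TensorProduct.counit_tmul, smul_eq_mul, mul_comm]
    refine ⟨σui, ⟨⟨?_, ?_⟩, hconv, ?_, ?_, ?_, ?_, ?_, ?_⟩, ?_⟩
    · intro h a b n h1 h2 hh
      simp only [htriv]
      conv_lhs => rw [← sum_counit_smul_snd hh]
      simp [Finset.sum_smul, smul_smul, mul_comm]
    · intro h
      rfl
    · intro h g n m h1 h2 g1 g2 hh hg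
      simp only [hσ, hσi]
      rw [← conv_mul_tmul_apply hh hg, Units.inv_mul, LinearMap.convOne_apply,
        Algebra.algebraMap_eq_smul_one, TensorProduct.counit_tmul, smul_eq_mul, mul_comm]
    · intro b
      simp [htriv]
    · intro h g b n m h1 h2 h3 g1 g2 g3 hh hg
      have e := hconv h g _ _ _ _ hh.collapse hg.collapse
      have e' := congrArg (b * ·) e
      simp only [Finset.mul_sum] at e'
      rw [htriv, htriv, smul_smul]
      refine Eq.trans (by simp) (e'.symm.trans ?_)
      refine Finset.sum_congr rfl fun i _ => Finset.sum_congr rfl fun j _ => ?_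
      simp only [htriv, hσ, map_smul, LinearMap.smul_apply, Bialgebra.counit_mul,
        mul_smul_comm, smul_mul_assoc, smul_smul, hc]
      rw [mul_assoc b, hc, mul_comm (Coalgebra.counit (R := k) (g2 j))]
    · intro h
      obtain ⟨n, h1, h2, hh⟩ := exists_comul_eq (k := k) h
      rw [hσu h 1 h1 h2 _ _ hh hrep1]
      simpa [hui1] using (hu h h1 h2 hh).2
    · intro h
      obtain ⟨n, h1, h2, hh⟩ := exists_comul_eq (k := k) h
      rw [hσu 1 h _ _ h1 h2 hrep1 hh]
      simpa [hui1] using (hu h h1 h2 hh).2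
    · intro h g f n m p h1 h2 g1 g2 f1 f2 hh hg hf
      simp only [htriv, hσ]
      rw [← cocycle_left_apply hh hg hf, ← cocycle_right_apply hh hg]
      exact congrArg (fun F => F.val.ofConv ((h ⊗ₜ[k] g) ⊗ₜ[k] f)) (sigma_cocycle v hc)
    · intro h g b
      simp [htriv, smul_smul]

end Statements
end
end

section
/- Let H be a bialgebra over a field k. Then H admits an antipode (i.e. there is a linear map S : H → H with S(h_{(1)})h_{(2)} = ε(h)1 = h_{(1)}S(h_{(2)}) for all h ∈ H) if and only if the Galois map λ : H⊗H → H⊗H, λ(h⊗g) = h_{(1)} ⊗ h_{(2)}g, is bijective. In particular, if λ is bijective then S(h) := ε(h₊)h₋ is an antipode, where h₊⊗h₋ := λ⁻¹(h⊗1). -/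
/-!
For a linear map `f : H → H` let `Φ_f(h ⊗ g) = h₍₁₎ ⊗ f(h₍₂₎)g` (`convEnd`). Coassociativity
shows that `f ↦ Φ_f` turns convolution into composition, and `Φ_id` is the Galois map `λ`, so a
convolution inverse `S` of the identity gives the inverse `Φ_S` of `λ` (`convEnd_convEnd`).

Conversely let `μ = λ⁻¹`, `E(h ⊗ g) = ε(h)g` (`epsLeft`) and `S(h) = E(μ(h ⊗ 1))`. As `λ` is right
`H`-linear and left `H`-colinear, so is `μ`. Right linearity gives
`S(h₍₁₎)h₍₂₎ = E(μ(h₍₁₎ ⊗ h₍₂₎)) = E(μ(λ(h ⊗ 1))) = ε(h)1`. Left colinearity gives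
`μ(h ⊗ 1) = h₍₁₎ ⊗ S(h₍₂₎)`, and since `E ∘ λ` is the multiplication of `H`, applying the
multiplication yields `h₍₁₎S(h₍₂₎) = E(h ⊗ 1) = ε(h)1` (`antipode_of_inverse`).
-/

open scoped TensorProduct
open Coalgebra

noncomputable section

section Statements

variable (k : Type*) [Field k]
variable (H : Type*) [Ring H] [Bialgebra k H]

/-- The Galois map `λ(h ⊗ g) = h₍₁₎ ⊗ h₍₂₎g` of a bialgebra. -/
def galoisMap : H ⊗[k] H →ₗ[k] H ⊗[k] H :=
  (LinearMap.lTensor H (LinearMap.mul' k H)) ∘ₗ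
    (TensorProduct.assoc k H H H).toLinearMap ∘ₗ
      (LinearMap.rTensor H (Coalgebra.comul (R := k) (A := H)))

/-- `t ↦ ε(t⁽¹⁾)t⁽²⁾ : H ⊗ H → H`, the map used to extract `S(h) = ε(h₊)h₋`. -/
def epsLeft : H ⊗[k] H →ₗ[k] H :=
  (TensorProduct.lid k H).toLinearMap ∘ₗ
    (LinearMap.rTensor H (Coalgebra.counit (R := k) (A := H)))

/-- The right `H`-linear, left `H`-colinear endomorphism `h ⊗ g ↦ h₍₁₎ ⊗ f(h₍₂₎)g` of `H ⊗ H`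
attached to a linear map `f : H → H`. The Galois map is the case `f = id`. -/
def convEnd (f : H →ₗ[k] H) : H ⊗[k] H →ₗ[k] H ⊗[k] H :=
  (LinearMap.lTensor H (LinearMap.mul' k H)) ∘ₗ
    (TensorProduct.assoc k H H H).toLinearMap ∘ₗ
      (LinearMap.rTensor H (LinearMap.lTensor H f ∘ₗ Coalgebra.comul (R := k) (A := H)))

lemma galoisMap_eq_convEnd : galoisMap k H = convEnd k H LinearMap.id := by
  simp [galoisMap, convEnd]

lemma convEnd_tmul (f : H →ₗ[k] H) (h g : H) :
    convEnd k H f (h ⊗ₜ[k] g)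
      = LinearMap.lTensor H f (Coalgebra.comul (R := k) h) * ((1 : H) ⊗ₜ[k] g) := by
  simp only [convEnd, LinearMap.comp_apply, LinearMap.rTensor_tmul, LinearEquiv.coe_coe]
  generalize LinearMap.lTensor H f (Coalgebra.comul (R := k) h) = t
  induction t using TensorProduct.induction_on with
  | zero => simp
  | tmul a b => simp
  | add a b ha hb => simp only [TensorProduct.add_tmul, map_add, ha, hb, add_mul]

lemma convEnd_mul_right (f : H →ₗ[k] H) (t : H ⊗[k] H) (g : H) :
    convEnd k H f (t * ((1 : H) ⊗ₜ[k] g)) = convEnd k H f t * ((1 : H) ⊗ₜ[k] g) := by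
  induction t using TensorProduct.induction_on with
  | zero => simp
  | tmul a b => simp [convEnd_tmul, mul_assoc]
  | add a b ha hb => simp only [add_mul, map_add, ha, hb]

/-- `convEnd` sends the convolution product to composition; here the convolution product `f * g`
is assumed to be the convolution unit `ε(·)1`. -/
lemma convEnd_convEnd (f g : H →ₗ[k] H)
    (hfg : ∀ h, LinearMap.mul' k H (TensorProduct.map f g (Coalgebra.comul (R := k) h))
      = Coalgebra.counit (R := k) h • (1 : H)) (t : H ⊗[k] H) :
    convEnd k H f (convEnd k H g t) = t := by
  have key (t : H ⊗[k] H) : convEnd k H f (LinearMap.lTensor H g t)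
      = LinearMap.lTensor H (LinearMap.mul' k H ∘ₗ TensorProduct.map f g)
        (TensorProduct.assoc k H H H
          (LinearMap.rTensor H (Coalgebra.comul (R := k) (A := H)) t)) := by
    induction t using TensorProduct.induction_on with
    | zero => simp
    | tmul a b =>
      simp only [LinearMap.lTensor_tmul, LinearMap.rTensor_tmul, convEnd_tmul]
      generalize Coalgebra.comul (R := k) a = s
      induction s using TensorProduct.induction_on with
      | zero => simp
      | tmul a b => simp
      | add a b ha hb => simp only [TensorProduct.add_tmul, map_add, ha, hb, add_mul]
    | add a b ha hb => simp only [map_add, ha, hb]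
  have hunit : (LinearMap.mul' k H ∘ₗ TensorProduct.map f g) ∘ₗ Coalgebra.comul (R := k) (A := H)
      = Algebra.linearMap k H ∘ₗ Coalgebra.counit := by
    ext h
    simp [hfg, Algebra.algebraMap_eq_smul_one]
  induction t using TensorProduct.induction_on with
  | zero => simp
  | tmul a b =>
    rw [convEnd_tmul, convEnd_mul_right, key, Coalgebra.coassoc_apply,
      ← LinearMap.lTensor_comp_apply, hunit, LinearMap.lTensor_comp_apply,
      Coalgebra.lTensor_counit_comul]
    simp
  | add a b ha hb => simp only [map_add, ha, hb]

lemma epsLeft_tmul (h g : H) :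
    epsLeft k H (h ⊗ₜ[k] g) = Coalgebra.counit (R := k) h • g := by
  simp [epsLeft]

lemma epsLeft_mul_right (t : H ⊗[k] H) (g : H) :
    epsLeft k H (t * ((1 : H) ⊗ₜ[k] g)) = epsLeft k H t * g := by
  induction t using TensorProduct.induction_on with
  | zero => simp
  | tmul a b => simp [epsLeft_tmul]
  | add a b ha hb => simp only [add_mul, map_add, ha, hb]

lemma epsLeft_galoisMap (t : H ⊗[k] H) :
    epsLeft k H (galoisMap k H t) = LinearMap.mul' k H t := by
  induction t using TensorProduct.induction_on with
  | zero => simp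
  | tmul a b =>
    rw [galoisMap_eq_convEnd, convEnd_tmul, epsLeft_mul_right, LinearMap.lTensor_id,
      LinearMap.id_apply]
    simp [epsLeft]
  | add a b ha hb => simp only [map_add, ha, hb]

/-- The left coaction `h ⊗ g ↦ h₍₁₎ ⊗ (h₍₂₎ ⊗ g)` of `H` on the first leg of `H ⊗ H`. -/
def leftCoact : H ⊗[k] H →ₗ[k] H ⊗[k] (H ⊗[k] H) :=
  (TensorProduct.assoc k H H H).toLinearMap ∘ₗ
    LinearMap.rTensor H (Coalgebra.comul (R := k) (A := H))

/-- Left colinearity of the Galois map; this is coassociativity. -/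
lemma leftCoact_galoisMap (t : H ⊗[k] H) :
    leftCoact k H (galoisMap k H t)
      = LinearMap.lTensor H (galoisMap k H) (leftCoact k H t) := by
  -- Both sides are `F` applied to the two bracketings of the threefold coproduct, where
  -- `F (a ⊗ (b ⊗ c)) = a ⊗ (b ⊗ c g)`.
  induction t using TensorProduct.induction_on with
  | zero => simp
  | tmul h g =>
    let F : H ⊗[k] (H ⊗[k] H) →ₗ[k] H ⊗[k] (H ⊗[k] H) :=
      LinearMap.lTensor H (LinearMap.lTensor H (LinearMap.mulRight k g))
    have h1 (s : H ⊗[k] H) : leftCoact k H (s * ((1 : H) ⊗ₜ[k] g)) = F (leftCoact k H s) := by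
      induction s using TensorProduct.induction_on with
      | zero => simp
      | tmul a b =>
        simp only [leftCoact, LinearMap.comp_apply, Algebra.TensorProduct.tmul_mul_tmul, mul_one,
          LinearMap.rTensor_tmul, LinearEquiv.coe_coe]
        generalize Coalgebra.comul (R := k) a = u
        induction u using TensorProduct.induction_on with
        | zero => simp
        | tmul a b => simp [F]
        | add a b ha hb => simp only [TensorProduct.add_tmul, map_add, ha, hb]
      | add a b ha hb => simp only [add_mul, map_add, ha, hb]
    have h2 (s : H ⊗[k] H) :
        LinearMap.lTensor H (galoisMap k H) (TensorProduct.assoc k H H H (s ⊗ₜ[k] g))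
          = F (LinearMap.lTensor H (Coalgebra.comul (R := k) (A := H)) s) := by
      induction s using TensorProduct.induction_on with
      | zero => simp
      | tmul a b =>
        simp only [TensorProduct.assoc_tmul, LinearMap.lTensor_tmul, F, galoisMap_eq_convEnd,
          convEnd_tmul, LinearMap.lTensor_id, LinearMap.id_apply]
        congr 1
        generalize Coalgebra.comul (R := k) b = u
        induction u using TensorProduct.induction_on with
        | zero => simp
        | tmul a b => simp
        | add a b ha hb => simp only [add_mul, map_add, ha, hb]
      | add a b ha hb => simp only [TensorProduct.add_tmul, map_add, ha, hb]
    have h3 : galoisMap k H (h ⊗ₜ[k] g) = Coalgebra.comul (R := k) h * ((1 : H) ⊗ₜ[k] g) := by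
      rw [galoisMap_eq_convEnd, convEnd_tmul, LinearMap.lTensor_id, LinearMap.id_apply]
    rw [h3, h1]
    simp only [leftCoact, LinearMap.comp_apply, LinearMap.rTensor_tmul, LinearEquiv.coe_coe]
    rw [h2, Coalgebra.coassoc_apply]
  | add a b ha hb => simp only [map_add, ha, hb]

lemma lTensor_epsLeft_leftCoact (t : H ⊗[k] H) :
    LinearMap.lTensor H (epsLeft k H) (leftCoact k H t) = t := by
  induction t using TensorProduct.induction_on with
  | zero => simp
  | tmul h g =>
    have key (s : H ⊗[k] H) :
        LinearMap.lTensor H (epsLeft k H) (TensorProduct.assoc k H H H (s ⊗ₜ[k] g))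
          = LinearMap.lTensor H (LinearMap.toSpanSingleton k H g)
            (LinearMap.lTensor H (Coalgebra.counit (R := k) (A := H)) s) := by
      induction s using TensorProduct.induction_on with
      | zero => simp
      | tmul a b => simp [epsLeft_tmul]
      | add a b ha hb => simp only [TensorProduct.add_tmul, map_add, ha, hb]
    simp only [leftCoact, LinearMap.comp_apply, LinearMap.rTensor_tmul, LinearEquiv.coe_coe]
    rw [key, Coalgebra.lTensor_counit_comul]
    simp
  | add a b ha hb => simp only [map_add, ha, hb]

/-- If `μ` inverts the Galois map, then `S(h) = ε(h₊)h₋` satisfies both antipode identities. The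
left one uses right linearity of `μ`, the right one its left colinearity, which yields
`μ(h ⊗ 1) = h₍₁₎ ⊗ S(h₍₂₎)`. -/
lemma antipode_of_inverse (μ : H ⊗[k] H →ₗ[k] H ⊗[k] H)
    (hl : μ ∘ₗ galoisMap k H = LinearMap.id) (hr : galoisMap k H ∘ₗ μ = LinearMap.id)
    (h : H) {n : ℕ} (h1 h2 : Fin n → H) (hrep : IsRep2 k H h h1 h2) :
    ∑ i, epsLeft k H (μ (h1 i ⊗ₜ[k] (1 : H))) * h2 i
        = Coalgebra.counit (R := k) h • (1 : H)
    ∧ ∑ i, h1 i * epsLeft k H (μ (h2 i ⊗ₜ[k] (1 : H)))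
        = Coalgebra.counit (R := k) h • (1 : H) := by
  have hl' (t) : μ (galoisMap k H t) = t := LinearMap.congr_fun hl t
  have hr' (t) : galoisMap k H (μ t) = t := LinearMap.congr_fun hr t
  have μ_mul (t : H ⊗[k] H) (g : H) :
      μ (t * ((1 : H) ⊗ₜ[k] g)) = μ t * ((1 : H) ⊗ₜ[k] g) := by
    rw [← hl' (μ t * _), galoisMap_eq_convEnd, convEnd_mul_right, ← galoisMap_eq_convEnd, hr']
  have μ_coact (t : H ⊗[k] H) :
      LinearMap.lTensor H μ (leftCoact k H t) = leftCoact k H (μ t) := by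
    conv_lhs => rw [← hr' t, leftCoact_galoisMap, ← LinearMap.lTensor_comp_apply, hl,
      LinearMap.lTensor_id, LinearMap.id_apply]
  constructor
  · have e (i) : epsLeft k H (μ (h1 i ⊗ₜ[k] (1 : H))) * h2 i
        = epsLeft k H (μ (h1 i ⊗ₜ[k] h2 i)) := by
      rw [← epsLeft_mul_right, ← μ_mul]
      simp
    have hg : galoisMap k H (h ⊗ₜ[k] 1) = ∑ i, h1 i ⊗ₜ[k] h2 i := by
      rw [galoisMap_eq_convEnd, convEnd_tmul, LinearMap.lTensor_id, LinearMap.id_apply,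
        ← Algebra.TensorProduct.one_def, mul_one, hrep]
    simp_rw [e, ← map_sum, ← hg, hl', epsLeft_tmul]
  · have hμ : μ (h ⊗ₜ[k] (1 : H)) = ∑ i, h1 i ⊗ₜ[k] epsLeft k H (μ (h2 i ⊗ₜ[k] (1 : H))) := by
      rw [← lTensor_epsLeft_leftCoact k H (μ (h ⊗ₜ[k] (1 : H))), ← μ_coact]
      simp only [leftCoact, LinearMap.comp_apply, LinearMap.rTensor_tmul, LinearEquiv.coe_coe]
      rw [hrep]
      simp [TensorProduct.sum_tmul]
    have := epsLeft_galoisMap k H (μ (h ⊗ₜ[k] (1 : H)))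
    rw [hr', epsLeft_tmul, hμ] at this
    simpa using this.symm

lemma exists_isRep2 (h : H) : ∃ (n : ℕ) (h1 h2 : Fin n → H), IsRep2 k H h h1 h2 := by
  obtain ⟨s, hs⟩ := TensorProduct.exists_finset (Coalgebra.comul (R := k) h)
  refine ⟨s.card, fun i => (s.equivFin.symm i).1.1, fun i => (s.equivFin.symm i).1.2, ?_⟩
  rw [IsRep2, hs, ← Finset.sum_coe_sort]
  exact (Equiv.sum_comp s.equivFin.symm (fun x : s => x.1.1 ⊗ₜ[k] x.1.2)).symm

/-- A bialgebra admits an antipode iff its Galois map `λ(h⊗g) = h₍₁₎ ⊗ h₍₂₎g` is bijective;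
and if `μ` is a two-sided inverse of `λ` then `S(h) := ε(h₊)h₋` (with
`h₊ ⊗ h₋ = μ(h ⊗ 1)`) is an antipode. -/
theorem statement10 :
    ((∃ S : H →ₗ[k] H,
        ∀ (h : H) {n : ℕ} (h1 h2 : Fin n → H), IsRep2 k H h h1 h2 →
          ∑ i, S (h1 i) * h2 i = Coalgebra.counit (R := k) h • (1 : H)
          ∧ ∑ i, h1 i * S (h2 i) = Coalgebra.counit (R := k) h • (1 : H))
      ↔ Function.Bijective (galoisMap k H))
    ∧
    (∀ μ : H ⊗[k] H →ₗ[k] H ⊗[k] H,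
      μ ∘ₗ galoisMap k H = LinearMap.id → galoisMap k H ∘ₗ μ = LinearMap.id →
      ∀ (h : H) {n : ℕ} (h1 h2 : Fin n → H), IsRep2 k H h h1 h2 →
        ∑ i, epsLeft k H (μ (h1 i ⊗ₜ[k] (1 : H))) * h2 i
            = Coalgebra.counit (R := k) h • (1 : H)
        ∧ ∑ i, h1 i * epsLeft k H (μ (h2 i ⊗ₜ[k] (1 : H)))
            = Coalgebra.counit (R := k) h • (1 : H)) := by
  refine ⟨⟨?_, ?_⟩, antipode_of_inverse k H⟩
  · rintro ⟨S, hS⟩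
    rw [galoisMap_eq_convEnd, Function.bijective_iff_has_inverse]
    refine ⟨convEnd k H S, convEnd_convEnd k H _ _ fun h => ?_,
      convEnd_convEnd k H _ _ fun h => ?_⟩
    all_goals
      obtain ⟨n, h1, h2, hrep⟩ := exists_isRep2 k H h
      rw [hrep]
    · simpa using (hS h h1 h2 hrep).1
    · simpa using (hS h h1 h2 hrep).2
  · intro hb
    let e := LinearEquiv.ofBijective (galoisMap k H) hb
    refine ⟨epsLeft k H ∘ₗ e.symm.toLinearMap ∘ₗ (TensorProduct.mk k H H).flip 1,
      fun h n h1 h2 hrep => ?_⟩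
    exact antipode_of_inverse k H e.symm.toLinearMap
      (LinearMap.ext fun t => e.symm_apply_apply t)
      (LinearMap.ext fun t => e.apply_symm_apply t) h h1 h2 hrep

end Statements
end
end
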